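/- Assume the form ⟨−,−⟩ is symmetric (and nondegenerate), and assume n = 2k with k ≥ 1. Then there exist isotropic subspaces H₀, H₁ ⊆ V with dim H₀ = dim H₁ = k such that for every isotropic subspace H ⊆ V with dim H = k, exactly one of the following holds: there is an isometry g of V with det g = 1 and g(H₀) = H, or there is an isometry g of V with det g = 1 and g(H₁) = H. In other words, the special orthogonal group SO(V) has exactly two orbits on the set of k-dimensional isotropic subspaces of V. -/

import Mathlib

/-!
Every `k`-dimensional isotropic subspace `H` of a nondegenerate symmetric space of dimension `2k`
is spanned by the first half of a hyperbolic basis (`exists_hyperbolic_basis`): take a basis `eᵢ`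
of `H`, choose `fᵢ` dual to it using nondegeneracy, and correct the `fᵢ` by elements of `H` so that
they become isotropic. Sending one hyperbolic basis to another is an isometry, so the full
orthogonal group acts transitively on these subspaces (`exists_isometry`).

An isometry has determinant `±1`. One that stabilizes `H` is block triangular in a hyperbolic basis
adapted to `H`, with diagonal blocks `A` and `D` satisfying `Aᵀ D = 1`, so its determinant is `1`
(`IsHyperbolic.det_eq_one`). On the other hand a reflection `r` has determinant `-1`. Hence for any
isotropic `H₀` of dimension `k` the subspaces `H₀` and `r H₀` represent the two orbits of the
special orthogonal group. An isotropic `H₀` exists because over `ℂ` the vectors of an orthogonal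
basis can be paired off into isotropic vectors `v + t w`.
-/

open Module

/-- Left orthogonal complement `H^⊥ = {v | ⟨v,w⟩ = 0 for all w ∈ H}` of a subspace with
respect to a bilinear form. -/
def bperp {V : Type*} [AddCommGroup V] [Module ℂ V]
    (B : V →ₗ[ℂ] V →ₗ[ℂ] ℂ) (H : Submodule ℂ V) : Submodule ℂ V where
  carrier := {v | ∀ w ∈ H, B v w = 0}
  add_mem' := by
    intro a b ha hb w hw
    rw [map_add, LinearMap.add_apply, ha w hw, hb w hw, add_zero]
  zero_mem' := by
    intro w hw
    simp
  smul_mem' := by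
    intro c a ha w hw
    rw [map_smul, LinearMap.smul_apply, ha w hw, smul_zero]

open scoped Matrix

section Hyperbolic

variable {V : Type*} [AddCommGroup V] [Module ℂ V] {k : ℕ} {B : V →ₗ[ℂ] V →ₗ[ℂ] ℂ}

/-- A hyperbolic basis: the vectors `eᵢ = b (inl i)` and `fᵢ = b (inr i)` span isotropic subspaces
and satisfy `⟨eᵢ, fⱼ⟩ = δᵢⱼ`. -/
structure IsHyperbolic (B : V →ₗ[ℂ] V →ₗ[ℂ] ℂ) (b : Basis (Fin k ⊕ Fin k) ℂ V) : Prop where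
  ll : ∀ i j, B (b (Sum.inl i)) (b (Sum.inl j)) = 0
  rr : ∀ i j, B (b (Sum.inr i)) (b (Sum.inr j)) = 0
  lr : ∀ i j, B (b (Sum.inl i)) (b (Sum.inr j)) = if i = j then 1 else 0
  rl : ∀ i j, B (b (Sum.inr i)) (b (Sum.inl j)) = if i = j then 1 else 0

/-- The subspace spanned by the first half of a basis. -/
def leftSpan (b : Basis (Fin k ⊕ Fin k) ℂ V) : Submodule ℂ V :=
  Submodule.span ℂ (Set.range fun i => b (Sum.inl i))

theorem exists_isotropic [FiniteDimensional ℂ V] (hdim : finrank ℂ V = 2 * k)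
    (hB : ∀ v, (∀ w, B v w = 0) → v = 0) (hsymm : ∀ v w, B v w = B w v) :
    ∃ H : Submodule ℂ V, H ≤ bperp B H ∧ finrank ℂ H = k := by
  obtain ⟨v₀, hv₀⟩ := LinearMap.BilinForm.exists_orthogonal_basis (K := ℂ) (B := B)
    ⟨fun x y => by simpa using hsymm x y⟩
  let σ : Fin (finrank ℂ V) ≃ Fin k ⊕ Fin k :=
    (finCongr (hdim.trans (two_mul k))).trans finSumFinEquiv.symm
  let v := v₀.reindex σ
  have hv : ∀ i j, i ≠ j → B (v i) (v j) = 0 := by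
    intro i j hij
    simp only [v, Basis.reindex_apply]
    exact hv₀ (fun h => hij (σ.symm.injective h))
  have hne : ∀ i, B (v i) (v i) ≠ 0 := by
    intro i h
    apply v.ne_zero i
    apply hB
    intro w
    have : B (v i) = 0 := by
      apply v.ext
      intro j
      by_cases hij : i = j
      · subst hij; simpa using h
      · simpa using hv i j hij
    simp [this]
  have ht : ∀ j : Fin k, ∃ t : ℂ, B (v (Sum.inl j)) (v (Sum.inl j))
      + t * t * B (v (Sum.inr j)) (v (Sum.inr j)) = 0 := by
    intro j
    obtain ⟨t, ht⟩ := IsAlgClosed.exists_eq_mul_self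
      (-B (v (Sum.inl j)) (v (Sum.inl j)) / B (v (Sum.inr j)) (v (Sum.inr j)))
    refine ⟨t, ?_⟩
    rw [← ht]
    field_simp [hne (Sum.inr j)]
    ring
  choose t ht using ht
  let e : Fin k → V := fun j => v (Sum.inl j) + t j • v (Sum.inr j)
  have he : ∀ i j, B (e i) (e j) = 0 := by
    intro i j
    by_cases hij : i = j
    · subst hij
      simp only [e, map_add, map_smul, LinearMap.add_apply, LinearMap.smul_apply, smul_eq_mul]
      rw [hv (Sum.inl i) (Sum.inr i) (by simp), hv (Sum.inr i) (Sum.inl i) (by simp)]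
      linear_combination ht i
    · simp only [e, map_add, map_smul, LinearMap.add_apply, LinearMap.smul_apply, smul_eq_mul]
      rw [hv (Sum.inl i) (Sum.inr j) (by simp), hv (Sum.inr i) (Sum.inl j) (by simp),
        hv (Sum.inl i) (Sum.inl j) (by simpa), hv (Sum.inr i) (Sum.inr j) (by simpa)]
      ring
  have hli : LinearIndependent ℂ e := by
    rw [Fintype.linearIndependent_iff]
    intro a ha i
    -- the coordinate along `v (inl i)` of `∑ aⱼ eⱼ` is `aᵢ`
    have := congrArg (v.coord (Sum.inl i)) ha
    simpa [e, Finsupp.single_apply] using this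
  refine ⟨Submodule.span ℂ (Set.range e), ?_, ?_⟩
  · rw [Submodule.span_le]
    rintro _ ⟨i, rfl⟩ w hw
    induction hw using Submodule.span_induction with
    | mem x hx => obtain ⟨j, rfl⟩ := hx; exact he i j
    | zero => simp
    | add x y _ _ hx hy => simp [hx, hy]
    | smul c x _ hx => simp [hx]
  · simpa using finrank_span_eq_card hli

theorem exists_hyperbolic_basis [FiniteDimensional ℂ V] (hdim : finrank ℂ V = 2 * k)
    (hB : ∀ v, (∀ w, B v w = 0) → v = 0) (hsymm : ∀ v w, B v w = B w v)
    (H : Submodule ℂ V) (hH : H ≤ bperp B H) (hHk : finrank ℂ H = k) :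
    ∃ b : Basis (Fin k ⊕ Fin k) ℂ V, IsHyperbolic B b ∧ leftSpan b = H := by
  let bH : Basis (Fin k) ℂ H := finBasisOfFinrankEq ℂ H hHk
  let e : Fin k → V := fun i => (bH i : V)
  have hee : ∀ i j, B (e i) (e j) = 0 := fun i j => hH (bH i).2 _ (bH j).2
  have hinj : Function.Injective B := by
    rw [injective_iff_map_eq_zero]
    intro v hv
    exact hB v fun w => by simp [hv]
  have hsurj : Function.Surjective B :=
    (LinearMap.injective_iff_surjective_of_finrank_eq_finrank
      (Subspace.dual_finrank_eq (K := ℂ) (V := V)).symm).1 hinj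
  have hf : ∀ j, ∃ f : V, ∀ i, B f (e i) = if i = j then 1 else 0 := by
    intro j
    obtain ⟨φ, hφ⟩ := LinearMap.exists_extend (bH.coord j)
    obtain ⟨f, hf⟩ := hsurj φ
    refine ⟨f, fun i => ?_⟩
    have := LinearMap.congr_fun hφ (bH i)
    simpa [hf, e, Finsupp.single_apply] using this
  choose f' hdual using hf
  have hdual_symm : ∀ i j, B (e i) (f' j) = if i = j then 1 else 0 := fun i j => by
    rw [hsymm, hdual]
  -- subtracting half of the Gram matrix makes the dual vectors isotropic
  let f : Fin k → V := fun j => f' j - (1 / 2 : ℂ) • ∑ l, B (f' l) (f' j) • e l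
  have hef : ∀ i j, B (e i) (f j) = if i = j then 1 else 0 := by
    intro i j
    simp [f, hdual_symm, hee]
  have hff : ∀ i j, B (f i) (f j) = 0 := by
    intro i j
    simp only [f, map_sub, map_smul, map_sum, LinearMap.sub_apply, LinearMap.smul_apply,
      LinearMap.sum_apply, hdual, hdual_symm, hee, smul_eq_mul]
    simp
    rw [hsymm (f' j) (f' i)]
    ring
  let u : Fin k ⊕ Fin k → V := Sum.elim e f
  have hli : LinearIndependent ℂ u := by
    rw [Fintype.linearIndependent_iff]
    intro a ha
    rw [Fintype.sum_sum_type] at ha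
    simp only [u, Sum.elim_inl, Sum.elim_inr] at ha
    have h1 : ∀ i, a (Sum.inr i) = 0 := by
      intro i
      have := congrArg (B (e i)) ha
      simpa [hee, hef] using this
    have h2 : ∀ i, a (Sum.inl i) = 0 := by
      intro i
      have := congrArg (fun x => B x (f i)) ha
      simpa [hff, hef] using this
    rintro (i | i)
    · exact h2 i
    · exact h1 i
  let b := basisOfLinearIndependentOfCardEqFinrank' u hli (by simp [hdim, two_mul])
  have hb : ⇑b = u := coe_basisOfLinearIndependentOfCardEqFinrank' ..
  refine ⟨b, ⟨?_, ?_, ?_, ?_⟩, ?_⟩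
  · intro i j; rw [hb]; exact hee i j
  · intro i j; rw [hb]; exact hff i j
  · intro i j; rw [hb]; exact hef i j
  · intro i j; rw [hb, hsymm]; simpa [u, eq_comm] using hef j i
  · rw [leftSpan, hb]
    have : (Set.range fun i => u (Sum.inl i)) = H.subtype '' Set.range bH := by
      rw [← Set.range_comp]; rfl
    rw [this, Submodule.span_image, bH.span_eq, Submodule.map_top, Submodule.range_subtype]

theorem exists_isometry {b b' : Basis (Fin k ⊕ Fin k) ℂ V} (hb : IsHyperbolic B b)
    (hb' : IsHyperbolic B b') :
    ∃ g : V ≃ₗ[ℂ] V, (∀ v w, B (g v) (g w) = B v w) ∧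
      Submodule.map (g : V →ₗ[ℂ] V) (leftSpan b) = leftSpan b' := by
  let g := b.equiv b' (Equiv.refl _)
  have hg : ∀ i, g (b i) = b' i := fun i => by simp [g]
  refine ⟨g, ?_, ?_⟩
  · have : B.compl₁₂ (g : V →ₗ[ℂ] V) (g : V →ₗ[ℂ] V) = B := by
      apply b.ext
      intro i
      apply b.ext
      intro j
      rcases i with i | i <;> rcases j with j | j <;>
        simp [hg, hb.ll, hb.rr, hb.lr, hb.rl, hb'.ll, hb'.rr, hb'.lr, hb'.rl]
    intro v w
    exact LinearMap.congr_fun (LinearMap.congr_fun this v) w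
  · rw [leftSpan, leftSpan, Submodule.map_span, ← Set.range_comp]
    congr 2
    ext i
    simp [hg]

theorem IsHyperbolic.toMatrix₂_eq {b : Basis (Fin k ⊕ Fin k) ℂ V} (hb : IsHyperbolic B b) :
    LinearMap.toMatrix₂ b b B = Matrix.fromBlocks 0 1 1 0 := by
  ext i j
  rcases i with i | i <;> rcases j with j | j <;>
    simp [LinearMap.toMatrix₂_apply, hb.ll, hb.rr, hb.lr, hb.rl, Matrix.one_apply]

theorem IsHyperbolic.gram {b : Basis (Fin k ⊕ Fin k) ℂ V} (hb : IsHyperbolic B b)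
    {g : V →ₗ[ℂ] V} (hg : ∀ v w, B (g v) (g w) = B v w) :
    (LinearMap.toMatrix b b g)ᵀ * Matrix.fromBlocks 0 1 1 0 * LinearMap.toMatrix b b g
      = Matrix.fromBlocks 0 1 1 0 := by
  have : B.compl₁₂ g g = B := by
    ext v w
    exact hg v w
  rw [← hb.toMatrix₂_eq, ← LinearMap.toMatrix₂_compl₁₂, this]

theorem IsHyperbolic.det_eq_or {b : Basis (Fin k ⊕ Fin k) ℂ V} (hb : IsHyperbolic B b)
    {g : V →ₗ[ℂ] V} (hg : ∀ v w, B (g v) (g w) = B v w) :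
    LinearMap.det g = 1 ∨ LinearMap.det g = -1 := by
  have h := congrArg Matrix.det (hb.gram hg)
  have hJ : (Matrix.fromBlocks 0 1 1 0 : Matrix (Fin k ⊕ Fin k) (Fin k ⊕ Fin k) ℂ).det ≠ 0 := by
    intro h0
    have : (Matrix.fromBlocks 0 1 1 0 : Matrix (Fin k ⊕ Fin k) (Fin k ⊕ Fin k) ℂ)
        * Matrix.fromBlocks 0 1 1 0 = 1 := by
      simp [Matrix.fromBlocks_multiply]
    have := congrArg Matrix.det this
    simp [h0] at this
  rw [Matrix.det_mul, Matrix.det_mul, Matrix.det_transpose, LinearMap.det_toMatrix] at h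
  apply mul_self_eq_one_iff.1
  apply mul_right_cancel₀ hJ
  linear_combination h

/-- An isometry stabilizing a maximal isotropic subspace is block triangular in an adapted
hyperbolic basis, and its two diagonal blocks have mutually inverse determinants. -/
theorem IsHyperbolic.det_eq_one {b : Basis (Fin k ⊕ Fin k) ℂ V} (hb : IsHyperbolic B b)
    {g : V →ₗ[ℂ] V} (hg : ∀ v w, B (g v) (g w) = B v w)
    (hs : Submodule.map g (leftSpan b) = leftSpan b) :
    LinearMap.det g = 1 := by
  have hG := hb.gram hg
  set M := LinearMap.toMatrix b b g with hM
  have h21 : M.toBlocks₂₁ = 0 := by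
    ext i j
    have hmem : g (b (Sum.inl j)) ∈ leftSpan b := by
      rw [← hs]
      exact Submodule.mem_map_of_mem (Submodule.subset_span ⟨j, rfl⟩)
    have hle : leftSpan b ≤ LinearMap.ker (b.coord (Sum.inr i)) := by
      rw [leftSpan, Submodule.span_le]
      rintro _ ⟨l, rfl⟩
      simp
    have := hle hmem
    simpa [Matrix.toBlocks₂₁, hM, LinearMap.toMatrix_apply] using this
  have hMb : M = Matrix.fromBlocks M.toBlocks₁₁ M.toBlocks₁₂ 0 M.toBlocks₂₂ := by
    rw [← h21, Matrix.fromBlocks_toBlocks]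
  rw [hMb, Matrix.fromBlocks_transpose, Matrix.fromBlocks_multiply,
    Matrix.fromBlocks_multiply] at hG
  have h12 := (Matrix.fromBlocks_inj.1 hG).2.1
  simp at h12
  have hdet := congrArg Matrix.det h12
  rw [Matrix.det_mul, Matrix.det_transpose, Matrix.det_one] at hdet
  rw [← LinearMap.det_toMatrix b, ← hM, hMb, Matrix.det_fromBlocks_zero₂₁, hdet]

/-- The isometry is the reflection `v ↦ v - ⟨w, v⟩ w` in the hyperplane orthogonal to `w`. -/
theorem exists_reflection [FiniteDimensional ℂ V] (hsymm : ∀ v w, B v w = B w v)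
    {w : V} (hw : B w w = 2) :
    ∃ r : V ≃ₗ[ℂ] V, (∀ v w, B (r v) (r w) = B v w) ∧
      LinearMap.det (r : V →ₗ[ℂ] V) = -1 := by
  let ρ : V →ₗ[ℂ] V := LinearMap.transvection (-(B w)) w
  have hρ : ∀ v, ρ v = v - B w v • w := fun v => by
    simp [ρ, LinearMap.transvection.apply, sub_eq_add_neg]
  have hinv : Function.Involutive ρ := by
    intro v
    simp only [hρ, map_sub, map_smul, hw, smul_eq_mul]
    module
  refine ⟨LinearEquiv.ofInvolutive ρ hinv, ?_, ?_⟩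
  · intro v v'
    change B (ρ v) (ρ v') = B v v'
    simp only [hρ, map_sub, map_smul, LinearMap.sub_apply, LinearMap.smul_apply, hw, smul_eq_mul]
    rw [hsymm v w]
    ring
  · change LinearMap.det ρ = -1
    simp only [ρ]
    rw [LinearMap.transvection.det, LinearMap.neg_apply, hw]
    norm_num

end Hyperbolic

/-- Proposition 3.9(2) (`prop:orbit-orth`), the case `n = 2k`: for a nondegenerate symmetric
form on a space of dimension `n = 2k` with `k ≥ 1`, the special orthogonal group has exactly
two orbits on the set of `k`-dimensional isotropic subspaces. -/
theorem stmt_6 {V : Type*} [AddCommGroup V] [Module ℂ V] [FiniteDimensional ℂ V]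
    (n k : ℕ) (hn : finrank ℂ V = n) (hnk : n = 2 * k) (hk : 1 ≤ k)
    (B : V →ₗ[ℂ] V →ₗ[ℂ] ℂ)
    (hB : ∀ v, (∀ w, B v w = 0) → v = 0)
    (hsymm : ∀ v w, B v w = B w v) :
    ∃ H₀ H₁ : Submodule ℂ V,
      H₀ ≤ bperp B H₀ ∧ H₁ ≤ bperp B H₁ ∧
      finrank ℂ H₀ = k ∧ finrank ℂ H₁ = k ∧
      ∀ H : Submodule ℂ V, H ≤ bperp B H → finrank ℂ H = k →
        Xor'
          (∃ g : V ≃ₗ[ℂ] V, (∀ v w, B (g v) (g w) = B v w) ∧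
            LinearMap.det (g : V →ₗ[ℂ] V) = 1 ∧ Submodule.map (g : V →ₗ[ℂ] V) H₀ = H)
          (∃ g : V ≃ₗ[ℂ] V, (∀ v w, B (g v) (g w) = B v w) ∧
            LinearMap.det (g : V →ₗ[ℂ] V) = 1 ∧ Submodule.map (g : V →ₗ[ℂ] V) H₁ = H) := by
  have hdim : finrank ℂ V = 2 * k := hn.trans hnk
  obtain ⟨H₀, hH₀, hH₀k⟩ := exists_isotropic hdim hB hsymm
  obtain ⟨b, hb, rfl⟩ := exists_hyperbolic_basis hdim hB hsymm H₀ hH₀ hH₀k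
  let i₀ : Fin k := ⟨0, hk⟩
  obtain ⟨r, hr, hrdet⟩ := exists_reflection (B := B) hsymm
    (w := b (Sum.inl i₀) + b (Sum.inr i₀)) (by
      simp only [map_add, LinearMap.add_apply, hb.ll, hb.rr, hb.lr, hb.rl]
      norm_num)
  refine ⟨leftSpan b, (leftSpan b).map (r : V →ₗ[ℂ] V), hH₀, ?_, hH₀k, ?_, ?_⟩
  · rintro _ ⟨v, hv, rfl⟩ _ ⟨w, hw, rfl⟩
    exact (hr v w).trans (hH₀ hv w hw)
  · exact (LinearEquiv.finrank_map_eq r _).trans hH₀k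
  intro H hH hHk
  have hsymm_iso : ∀ g : V ≃ₗ[ℂ] V, (∀ v w, B (g v) (g w) = B v w) →
      ∀ v w, B (g.symm v) (g.symm w) = B v w := by
    intro g hg v w
    rw [← hg, g.apply_symm_apply, g.apply_symm_apply]
  have hsymm_det : ∀ g : V ≃ₗ[ℂ] V, LinearMap.det (g.symm : V →ₗ[ℂ] V) *
      LinearMap.det (g : V →ₗ[ℂ] V) = 1 := fun g => LinearEquiv.det_symm_mul_det g
  refine (xor_iff_or_and_not_and _ _).2 ⟨?_, ?_⟩
  · obtain ⟨b', hb', rfl⟩ := exists_hyperbolic_basis hdim hB hsymm H hH hHk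
    obtain ⟨g, hg, hgb⟩ := exists_isometry hb hb'
    rcases hb.det_eq_or (g := (g : V →ₗ[ℂ] V)) hg with h | h
    · exact Or.inl ⟨g, hg, h, hgb⟩
    · refine Or.inr ⟨r.symm.trans g, ?_, ?_, ?_⟩
      · intro v w
        exact (hg _ _).trans (hsymm_iso r hr v w)
      · rw [LinearEquiv.coe_trans, LinearMap.det_comp, h]
        have := hsymm_det r
        rw [hrdet] at this
        linear_combination this
      · rw [← Submodule.map_comp, ← hgb]
        congr 1
        ext v
        simp
  · rintro ⟨⟨g, hg, hgd, hgH⟩, ⟨g', hg', hgd', hgH_two⟩⟩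
    -- `g⁻¹ g' r` stabilizes the first subspace but has determinant `-1`
    have hdet : LinearMap.det ((g.symm : V →ₗ[ℂ] V) ∘ₗ (g' : V →ₗ[ℂ] V) ∘ₗ (r : V →ₗ[ℂ] V)) = 1 := by
      apply hb.det_eq_one
      · intro v w
        exact (hsymm_iso g hg _ _).trans ((hg' _ _).trans (hr v w))
      · rw [Submodule.map_comp, Submodule.map_comp, hgH_two, ← hgH, ← Submodule.map_comp]
        simp
    have hs := hsymm_det g
    rw [hgd, mul_one] at hs
    rw [LinearMap.det_comp, LinearMap.det_comp, hs, hgd', hrdet] at hdet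
    norm_num at hdet
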